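/- arXiv:1604.05023 — 3 statements merged into one kernel-verified Lean document; each statement's English description precedes it below -/
import Mathlib

section
/- Let G be a port-numbered graph, let r ≥ 0 be an integer, and suppose that two distinct nodes v and w of G satisfy B^r(v) = B^r(w). Then for every function f defined on augmented truncated views at depth r, the assignment u ↦ f(B^r(u)) is not a leader election output for G. In particular, no deterministic distributed algorithm running in at most r rounds can elect a leader in G, regardless of the information given identically to all nodes. -/
namespace Election

/-- A port-numbered graph: a simple undirected connected graph on `n ≥ 3` unlabeled nodes
(vertex set `Fin n`) in which, at each node `v` of degree `d`, the edges incident to `v`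
carry distinct port numbers `0, …, d-1` at `v`. `portNum v u` is the port number at `v`
of the edge `{v, u}` (meaningful only when `v` and `u` are adjacent). -/
structure PortGraph where
  n : ℕ
  three_le : 3 ≤ n
  G : SimpleGraph (Fin n)
  conn : G.Connected
  portNum : Fin n → Fin n → ℕ
  port_lt : ∀ v u : Fin n, G.Adj v u → portNum v u < Nat.card {w : Fin n // G.Adj v w}
  port_inj : ∀ v u w : Fin n, G.Adj v u → G.Adj v w → portNum v u = portNum v w → u = w

namespace PortGraph

/-- The degree of a node. -/
noncomputable def degree (PG : PortGraph) (v : Fin PG.n) : ℕ :=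
  Nat.card {w : Fin PG.n // PG.G.Adj v w}

open Classical in
/-- The neighbor of `v` reached through port `p` (junk value `v` if there is none). -/
noncomputable def nbr (PG : PortGraph) (v : Fin PG.n) (p : ℕ) : Fin PG.n :=
  if h : ∃ u : Fin PG.n, PG.G.Adj v u ∧ PG.portNum v u = p then h.choose else v

/-- Abstract (augmented truncated) views: a view at depth `0` is a leaf carrying a degree;
a view at depth `ℓ+1` is a node whose children are listed in the order of the port numbers
`0, …, d-1` at the root, each child carrying the port number at the other endpoint of the
corresponding edge together with the subview at depth `ℓ`. -/
inductive AugView : Type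
  | leaf (deg : ℕ) : AugView
  | node (children : List (ℕ × AugView)) : AugView

/-- The augmented truncated view `B^ℓ(v)` of node `v` at depth `ℓ`. -/
noncomputable def augView (PG : PortGraph) : ℕ → Fin PG.n → AugView
  | 0, v => AugView.leaf (PG.degree v)
  | (ℓ + 1), v => AugView.node ((List.range (PG.degree v)).map
      fun p => (PG.portNum (PG.nbr v p) v, PG.augView ℓ (PG.nbr v p)))

/-- `IsPath PG v s vs` means: the sequence `s = (p₁, q₁, …, p_k, q_k)` of port numbers codes
a path in `PG` starting at `v` whose i-th edge carries port `p_i` at the endpoint closer to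
`v` and `q_i` at the other endpoint, and `vs` is the list of visited vertices (from `v` on). -/
inductive IsPath (PG : PortGraph) : Fin PG.n → List ℕ → List (Fin PG.n) → Prop
  | nil (v : Fin PG.n) : IsPath PG v [] [v]
  | cons (v u : Fin PG.n) (p q : ℕ) (rest : List ℕ) (vs : List (Fin PG.n))
      (hadj : PG.G.Adj v u) (hp : PG.portNum v u = p) (hq : PG.portNum u v = q)
      (htail : IsPath PG u rest vs) : IsPath PG v (p :: q :: rest) (v :: vs)

/-- `P` is a leader election output for `PG`: every node `v` outputs a sequence of port
numbers coding a simple path starting at `v`, and all these paths end at a common node. -/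
def IsLeaderElection (PG : PortGraph) (P : Fin PG.n → List ℕ) : Prop :=
  ∃ leader : Fin PG.n, ∀ v : Fin PG.n, ∃ vs : List (Fin PG.n),
    PG.IsPath v (P v) vs ∧ vs.Nodup ∧ vs.getLast? = some leader

/-- A graph is feasible if at some depth all augmented truncated views are pairwise distinct. -/
def Feasible (PG : PortGraph) : Prop :=
  ∃ ℓ : ℕ, Function.Injective (PG.augView ℓ)

/-- The election index: the smallest depth at which all augmented truncated views are distinct. -/
noncomputable def electionIndex (PG : PortGraph) : ℕ :=
  sInf {ℓ : ℕ | Function.Injective (PG.augView ℓ)}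

/-- The diameter: the maximum distance between two nodes. -/
noncomputable def diam (PG : PortGraph) : ℕ :=
  sSup (Set.range fun p : Fin PG.n × Fin PG.n => PG.G.dist p.1 p.2)

end PortGraph

namespace PortGraph

variable {PG : PortGraph}

theorem IsPath.ne_nil {v : Fin PG.n} {s : List ℕ} {vs : List (Fin PG.n)}
    (h : PG.IsPath v s vs) : vs ≠ [] := by
  cases h <;> exact List.cons_ne_nil _ _

/-- Read backwards from its last node, a code retraces its path: `q_i` is the port at the current
node that leads to the previous one. -/
theorem IsPath.start_eq_of_getLast?_eq {v w : Fin PG.n} {s : List ℕ} {vs ws : List (Fin PG.n)}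
    (hv : PG.IsPath v s vs) (hw : PG.IsPath w s ws) (hlast : vs.getLast? = ws.getLast?) :
    v = w := by
  induction hv generalizing w ws with
  | nil v =>
    cases hw
    simpa using hlast
  | cons v u p q rest vs hvu _ hq hu ih =>
    obtain _ | ⟨_, u', _, _, _, ws, hwu', _, hq', hu'⟩ := hw
    rw [List.getLast?_cons_of_ne_nil hu.ne_nil, List.getLast?_cons_of_ne_nil hu'.ne_nil] at hlast
    obtain rfl : u = u' := ih hu' hlast
    exact PG.port_inj u v w hvu.symm hwu'.symm (hq.trans hq'.symm)

theorem IsLeaderElection.injective {P : Fin PG.n → List ℕ} (hP : PG.IsLeaderElection P) :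
    Function.Injective P := by
  intro v w hvw
  obtain ⟨leader, hleader⟩ := hP
  obtain ⟨vs, hv, -, hvs⟩ := hleader v
  obtain ⟨ws, hw, -, hws⟩ := hleader w
  rw [← hvw] at hw
  exact hv.start_eq_of_getLast?_eq hw (hvs.trans hws.symm)

end PortGraph

/-- If two distinct nodes have equal augmented truncated views at depth `r`, then no
assignment of the form `u ↦ f (B^r(u))` is a leader election output for `G`. -/
theorem election_impossible_of_equal_views (PG : PortGraph) (r : ℕ)
    (v w : Fin PG.n) (hvw : v ≠ w) (hview : PG.augView r v = PG.augView r w) :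
    ∀ f : PortGraph.AugView → List ℕ,
      ¬ PG.IsLeaderElection (fun u => f (PG.augView r u)) := by
  intro f hf
  exact hvw (hf.injective (congrArg f hview))

end Election
end

section
/- There exist a constant C > 0, an oracle A assigning to every feasible port-numbered graph a binary advice string, and a function f defined on pairs (binary string, augmented truncated view), such that for every feasible port-numbered graph G with n nodes and election index φ: the advice length |A(G)| is at most C·n·log n, and the assignment v ↦ f(A(G), B^φ(v)) is a leader election output for G. In other words, advice of size O(n log n) suffices to perform leader election in time equal to the election index. -/
namespace Election

/-!
The views at the election index of graphs with `n` nodes number at most `n * (n + 1) ^ (n ^ 2)`,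
because such a graph is given by its table of port numbers. So they have pairwise distinct
codewords of length `n ^ 2 + 1` over a field `K` with at least `n ^ 4` and at most `16 * n ^ 4`
elements. Read as polynomials, the codewords of the `n` views of a given graph take distinct values
at some point `a` of `K`, as the product of their differences has too small a degree to vanish
everywhere. The advice consists of `a` and, for each node, the value at `a` of its codeword together
with its parent in a breadth-first tree and the two ports of the edge to it: `O(log n)` bits per
node. A node finds itself in this list by evaluating the codeword of its own view, and then follows
the tree to the root.
-/

open Function Polynomial

section Hashing

open Cardinal in
theorem exists_injective_eval {K ι : Type*} [CommRing K] [IsDomain K] [Finite ι] {d : ℕ}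
    {s : ι → K[X]} (hs : Injective s) (hdeg : ∀ i, (s i).natDegree ≤ d)
    (hK : (Nat.card ι ^ 2 * d : ℕ) < #K) : ∃ a : K, Injective fun i => (s i).eval a := by
  classical
  have := Fintype.ofFinite ι
  let P : K[X] := ∏ x ∈ Finset.univ.offDiag, (s x.1 - s x.2)
  have hP : P ≠ 0 := Finset.prod_ne_zero_iff.2 fun x hx =>
    sub_ne_zero.2 fun h => (Finset.mem_offDiag.1 hx).2.2 (hs h)
  have hPdeg : P.natDegree ≤ Nat.card ι ^ 2 * d := calc
    P.natDegree ≤ ∑ x ∈ Finset.univ.offDiag, (s x.1 - s x.2).natDegree := natDegree_prod_le _ _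
    _ ≤ (Finset.univ : Finset ι).offDiag.card • d := Finset.sum_le_card_nsmul _ _ d fun x _ =>
      (natDegree_sub_le _ _).trans (max_le (hdeg _) (hdeg _))
    _ ≤ Nat.card ι ^ 2 * d := by
      rw [smul_eq_mul, Nat.card_eq_fintype_card, sq, Finset.offDiag_card, Finset.card_univ]
      exact Nat.mul_le_mul_right _ (Nat.sub_le _ _)
  obtain ⟨a, ha⟩ := exists_eval_ne_zero_of_natDegree_lt_card P hP
    ((Nat.cast_le.2 hPdeg).trans_lt hK)
  refine ⟨a, fun i j hij => by_contra fun hne => ha ?_⟩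
  rw [eval_prod]
  exact Finset.prod_eq_zero (i := (i, j)) (by simpa using hne) (by simpa [sub_eq_zero] using hij)

open Cardinal in
theorem exists_injective_eval_ofFn {K ι : Type*} [CommRing K] [IsDomain K] [DecidableEq K]
    [Finite ι] {d : ℕ} {c : ι → Fin d → K} (hc : Injective c)
    (hK : (Nat.card ι ^ 2 * d : ℕ) < #K) : ∃ a : K, Injective fun i => (ofFn d (c i)).eval a :=
  exists_injective_eval ((injective_ofFn d).comp hc)
    (fun i => natDegree_le_of_degree_le (ofFn_degree_lt (c i)).le) hK

end Hashing

section Encoding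

theorem exists_injective_sigma_list_bool {ι : Type*} {α : ι → Type*} [∀ i, Finite (α i)]
    {len : ι → ℕ} (hlen : Injective len) (hcard : ∀ i, Nat.card (α i) ≤ 2 ^ len i) :
    ∃ enc : (Σ i, α i) → List Bool, Injective enc ∧ ∀ x, (enc x).length = len x.1 := by
  have (i : ι) : Nonempty (α i ↪ List.Vector Bool (len i)) := by
    have := Fintype.ofFinite (α i)
    apply Embedding.nonempty_of_card_le
    simpa [Nat.card_eq_fintype_card] using hcard i
  let toBits (i : ι) : α i ↪ List.Vector Bool (len i) := (this i).some
  refine ⟨fun x => (toBits x.1 x.2).toList, ?_, fun x => List.Vector.toList_length _⟩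
  rintro ⟨i, x⟩ ⟨j, y⟩ hxy
  obtain rfl : i = j := hlen (by simpa using congrArg List.length hxy)
  obtain rfl : x = y := (toBits i).injective (List.Vector.toList_injective hxy)
  rfl

/-- The number of bits sufficient to write any natural number up to `n`. -/
def bitWidth (n : ℕ) : ℕ := Nat.log 2 n + 1

theorem lt_two_pow_bitWidth (n : ℕ) : n < 2 ^ bitWidth n :=
  Nat.lt_pow_succ_log_self (by norm_num) n

theorem bitWidth_mono : Monotone bitWidth := fun _ _ h =>
  Nat.succ_le_succ (Nat.log_mono_right h)

theorem bitWidth_le_two_mul_logb {n : ℕ} (hn : 2 ≤ n) : (bitWidth n : ℝ) ≤ 2 * Real.logb 2 n := by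
  have hlog : (Nat.log 2 n : ℝ) ≤ Real.logb 2 n := mod_cast Real.natLog_le_logb n 2
  have hone : (1 : ℝ) ≤ Nat.log 2 n := mod_cast Nat.log_pos (by norm_num) hn
  rw [bitWidth]
  push_cast
  linarith

end Encoding

section BreadthFirstTree

theorem exists_adj_dist_lt {V : Type*} {G : SimpleGraph V} {v r : V} (h : G.Reachable v r)
    (hne : v ≠ r) : ∃ u, G.Adj v u ∧ G.dist u r < G.dist v r := by
  obtain ⟨w, hw⟩ := h.exists_walk_length_eq_dist
  cases w with
  | nil => exact absurd rfl hne
  | cons hadj w =>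
    rw [SimpleGraph.Walk.length_cons] at hw
    exact ⟨_, hadj, hw ▸ Nat.lt_succ_of_le (SimpleGraph.dist_le w)⟩

theorem dist_lt_card {V : Type*} [Fintype V] {G : SimpleGraph V} {v r : V}
    (h : G.Reachable v r) : G.dist v r < Fintype.card V := by
  obtain ⟨w, hw, hlen⟩ := h.exists_path_of_dist
  exact hlen ▸ hw.length_lt

/-- A rooted tree on `n` nodes with port numbers: the entry at a node `v` other than the root is
`(p, q, u)`, where `u` is the parent of `v`, and `p` and `q` are the ports of the edge `{v, u}`
at `v` and at `u`. The entry at the root is `none`. -/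
abbrev TreeTable (n : ℕ) : Type := Fin n → Option (Fin n × Fin n × Fin n)

/-- The ports on the way from a node to the root of a tree, cut off after `k` edges. -/
def TreeTable.pathToRoot {n : ℕ} (T : TreeTable n) : ℕ → Fin n → List ℕ
  | 0, _ => []
  | k + 1, v => match T v with
    | none => []
    | some (p, q, u) => p :: q :: T.pathToRoot k u

namespace PortGraph

variable (PG : PortGraph)

theorem portNum_lt {v u : Fin PG.n} (h : PG.G.Adj v u) : PG.portNum v u < PG.n :=
  (PG.port_lt v u h).trans_le <| by simpa using Finite.card_subtype_le (PG.G.Adj v)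

/-- The tree described by `T` is a breadth-first tree of `PG` with root `r`. -/
structure IsBFSTable (r : Fin PG.n) (T : TreeTable PG.n) : Prop where
  root : T r = none
  exists_parent : ∀ v, v ≠ r → ∃ (u : Fin PG.n) (h : PG.G.Adj v u), PG.G.dist u r < PG.G.dist v r ∧
    T v = some (⟨PG.portNum v u, PG.portNum_lt h⟩, ⟨PG.portNum u v, PG.portNum_lt h.symm⟩, u)

theorem exists_isBFSTable (r : Fin PG.n) : ∃ T, PG.IsBFSTable r T := by
  choose parent hadj hdist using fun v (hv : v ≠ r) =>
    exists_adj_dist_lt (PG.conn.preconnected v r) hv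
  refine ⟨fun v => if hv : v = r then none else
    some (⟨_, PG.portNum_lt (hadj v hv)⟩, ⟨_, PG.portNum_lt (hadj v hv).symm⟩, parent v hv),
    by simp, fun v hv => ⟨parent v hv, hadj v hv, hdist v hv, by simp [hv]⟩⟩

variable {PG} in
/-- The last clause serves the induction: by it, a node does not occur on the path from its parent
to the root. -/
theorem IsBFSTable.isPath_pathToRoot {r : Fin PG.n} {T : TreeTable PG.n}
    (hT : PG.IsBFSTable r T) {k : ℕ} {v : Fin PG.n} (hk : PG.G.dist v r ≤ k) :
    ∃ vs, PG.IsPath v (T.pathToRoot k v) vs ∧ vs.Nodup ∧ vs.getLast? = some r ∧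
      ∀ w ∈ vs, PG.G.dist w r ≤ PG.G.dist v r := by
  induction k generalizing v with
  | zero =>
    obtain rfl : v = r := PG.conn.dist_eq_zero_iff.1 (Nat.le_zero.1 hk)
    exact ⟨[v], .nil v, by simp⟩
  | succ k ih =>
    obtain rfl | hv := eq_or_ne v r
    · rw [TreeTable.pathToRoot, hT.root]
      exact ⟨[v], .nil v, by simp⟩
    obtain ⟨u, hadj, hdist, hTv⟩ := hT.exists_parent v hv
    obtain ⟨vs, hpath, hnodup, hlast, hle⟩ := ih (v := u) (by omega)
    rw [TreeTable.pathToRoot, hTv]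
    refine ⟨v :: vs, .cons v u _ _ _ vs hadj rfl rfl hpath, ?_, ?_, ?_⟩
    · exact List.nodup_cons.2 ⟨fun hmem => (hle v hmem).not_gt hdist, hnodup⟩
    · simp [List.getLast?_cons, hlast]
    · exact List.forall_mem_cons.2 ⟨le_rfl, fun w hw => (hle w hw).trans hdist.le⟩

end PortGraph

end BreadthFirstTree

section CountingViews

/-- The entry of the table of a port-numbered graph at `(v, u)` is the port number at `v` of the
edge `{v, u}`, or `none` if `v` and `u` are not adjacent. Unlike `PortGraph.portNum`, the table has
no arbitrary values, so that there are finitely many tables with `n` nodes. -/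
abbrev PortTable (n : ℕ) : Type := Fin n → Fin n → Option (Fin n)

namespace PortTable

open PortGraph (AugView)

variable {n : ℕ} (M : PortTable n)

/-- The counterpart of `PortGraph.degree` for a port table. -/
noncomputable def degree (v : Fin n) : ℕ := Nat.card {u : Fin n // (M v u).isSome}

open Classical in
/-- The counterpart of `PortGraph.nbr` for a port table, with the same junk value. -/
noncomputable def nbr (v : Fin n) (p : ℕ) : Fin n :=
  if h : ∃ u, (M v u).map Fin.val = some p then h.choose else v

/-- The counterpart of `PortGraph.augView` for a port table, with the junk value `0` for a missing
port number. -/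
noncomputable def augView : ℕ → Fin n → AugView
  | 0, v => .leaf (M.degree v)
  | ℓ + 1, v => .node ((List.range (M.degree v)).map
      fun p => ((M (M.nbr v p) v).elim 0 Fin.val, augView ℓ (M.nbr v p)))

/-- The augmented truncated view whose depth is the counterpart of `PortGraph.electionIndex`. -/
noncomputable def electionView (v : Fin n) : AugView :=
  M.augView (sInf {ℓ | Injective (M.augView ℓ)}) v

end PortTable

namespace PortGraph

variable (PG : PortGraph) (v : Fin PG.n)

open Classical in
/-- The port table of a port-numbered graph, which determines all its views. -/
noncomputable def portTable : PortTable PG.n := fun v u =>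
  if h : PG.G.Adj v u then some ⟨PG.portNum v u, PG.portNum_lt h⟩ else none

theorem portTable_of_adj {v u : Fin PG.n} (h : PG.G.Adj v u) :
    PG.portTable v u = some ⟨PG.portNum v u, PG.portNum_lt h⟩ :=
  dif_pos h

theorem degree_portTable : PG.portTable.degree v = PG.degree v := by
  simp [PortTable.degree, degree, portTable, apply_dite Option.isSome]

theorem nbr_portTable (p : ℕ) : PG.portTable.nbr v p = PG.nbr v p := by
  have (u : Fin PG.n) : (PG.portTable v u).map Fin.val = some p ↔
      PG.G.Adj v u ∧ PG.portNum v u = p := by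
    by_cases h : PG.G.Adj v u <;> simp [portTable, h]
  unfold PortTable.nbr nbr
  congr! 3 <;> exact this _

theorem exists_portNum_eq {p : ℕ} (hp : p < PG.degree v) :
    ∃ u, PG.G.Adj v u ∧ PG.portNum v u = p := by
  let port (u : {w : Fin PG.n // PG.G.Adj v w}) : Fin (PG.degree v) :=
    ⟨PG.portNum v u, PG.port_lt v u u.2⟩
  have hinj : Injective port := fun a b hab =>
    Subtype.ext (PG.port_inj v a b a.2 b.2 (congrArg Fin.val hab))
  obtain ⟨u, hu⟩ := ((Nat.bijective_iff_injective_and_card port).2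
    ⟨hinj, by rw [Nat.card_fin, degree]⟩).2 ⟨p, hp⟩
  exact ⟨u, u.2, congrArg Fin.val hu⟩

theorem adj_nbr {p : ℕ} (hp : p < PG.degree v) : PG.G.Adj v (PG.nbr v p) := by
  have h := PG.exists_portNum_eq v hp
  rw [nbr, dif_pos h]
  exact h.choose_spec.1

theorem augView_portTable (ℓ : ℕ) : PG.portTable.augView ℓ = PG.augView ℓ := by
  induction ℓ with
  | zero =>
    funext v
    rw [PortTable.augView, augView, degree_portTable]
  | succ ℓ ih =>
    funext v
    simp only [PortTable.augView, augView, degree_portTable, nbr_portTable, ih]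
    congr 1
    refine List.map_congr_left fun p hp => ?_
    rw [PG.portTable_of_adj (PG.adj_nbr v (List.mem_range.1 hp)).symm, Option.elim_some]

theorem electionView_portTable :
    PG.portTable.electionView v = PG.augView PG.electionIndex v := by
  simp only [PortTable.electionView, electionIndex, augView_portTable]

/-- A finite set containing the views at the election index of all port-numbered graphs with `n`
nodes. It also contains views of tables that do not come from a graph. -/
def electionViews (n : ℕ) : Set AugView :=
  Set.range fun x : PortTable n × Fin n => x.1.electionView x.2

theorem augView_electionIndex_mem_electionViews :
    PG.augView PG.electionIndex v ∈ electionViews PG.n :=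
  ⟨(PG.portTable, v), PG.electionView_portTable v⟩

theorem encard_electionViews_le (n : ℕ) :
    (electionViews n).encard ≤ ((n + 1) ^ n ^ 2 * n : ℕ) := by
  rw [electionViews, ← Set.image_univ]
  refine (Set.encard_image_le _ _).trans_eq ?_
  simp [Set.encard_univ, ENat.card_eq_coe_fintype_card, pow_mul, sq]

end PortGraph

end CountingViews

section Advice

/-- The field in which the hash values of the views of graphs with `n` nodes lie. It has more than
`n ^ 2 * (n ^ 2 + 1)` elements, and each can be written with `4 * bitWidth n` bits. -/
abbrev HashField (n : ℕ) : Type := GaloisField 2 (4 * bitWidth n)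

theorem card_hashField (n : ℕ) : Nat.card (HashField n) = 2 ^ (4 * bitWidth n) :=
  GaloisField.card 2 _ (by simp [bitWidth])

theorem sq_mul_lt_card_hashField (n : ℕ) :
    n ^ 2 * (n ^ 2 + 1) < Nat.card (HashField n) := by
  have hsq : n ^ 2 < (2 ^ bitWidth n) ^ 2 := Nat.pow_lt_pow_left (lt_two_pow_bitWidth n) two_ne_zero
  calc n ^ 2 * (n ^ 2 + 1) < (2 ^ bitWidth n) ^ 2 * (2 ^ bitWidth n) ^ 2 :=
        Nat.mul_lt_mul_of_lt_of_le hsq hsq (by positivity)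
    _ = Nat.card (HashField n) := by rw [card_hashField]; ring

/-- The advice for graphs with `n` nodes: the point at which codewords are evaluated and, for each
node, its hash value and its entry in a tree table. -/
abbrev Advice (n : ℕ) : Type :=
  HashField n × (Fin n → HashField n × Option (Fin n × Fin n × Fin n))

theorem card_advice_le (n : ℕ) : Nat.card (Advice n) ≤ 2 ^ ((7 * n + 4) * bitWidth n) := by
  have hn : n ^ 3 + 1 ≤ (2 ^ bitWidth n) ^ 3 :=
    Nat.succ_le_of_lt (Nat.pow_lt_pow_left (lt_two_pow_bitWidth n) three_ne_zero)
  calc Nat.card (Advice n)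
      = 2 ^ (4 * bitWidth n) * (2 ^ (4 * bitWidth n) * (n ^ 3 + 1)) ^ n := by
        simp only [Nat.card_prod, Nat.card_fun, card_hashField, Finite.card_option, Nat.card_fin]
        ring
    _ ≤ 2 ^ (4 * bitWidth n) * (2 ^ (4 * bitWidth n) * (2 ^ bitWidth n) ^ 3) ^ n := by gcongr
    _ = 2 ^ ((7 * n + 4) * bitWidth n) := by ring

theorem exists_advice_encoding : ∃ enc : (Σ n, Advice n) → List Bool,
    Injective enc ∧ ∀ x, (enc x).length = (7 * x.1 + 4) * bitWidth x.1 := by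
  have hmono : StrictMono fun n => (7 * n + 4) * bitWidth n := fun a b hab =>
    Nat.mul_lt_mul_of_lt_of_le (by omega) (bitWidth_mono hab.le) (Nat.succ_pos _)
  exact exists_injective_sigma_list_bool hmono.injective card_advice_le

namespace PortGraph

theorem exists_injOn_electionViews (n : ℕ) :
    ∃ c : AugView → Fin (n ^ 2 + 1) → HashField n, Set.InjOn c (electionViews n) := by
  have hcard : (n + 1) ^ n ^ 2 * n ≤ Nat.card (Fin (n ^ 2 + 1) → HashField n) := calc
    (n + 1) ^ n ^ 2 * n ≤ (2 ^ bitWidth n) ^ n ^ 2 * 2 ^ bitWidth n := by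
      gcongr
      · exact lt_two_pow_bitWidth n
      · exact (lt_two_pow_bitWidth n).le
    _ = (2 ^ bitWidth n) ^ (n ^ 2 + 1) := (pow_succ _ _).symm
    _ ≤ (2 ^ (4 * bitWidth n)) ^ (n ^ 2 + 1) := by gcongr <;> omega
    _ = Nat.card (Fin (n ^ 2 + 1) → HashField n) := by simp [Nat.card_fun, card_hashField]
  obtain ⟨c, -, hc⟩ := (Set.finite_range _).exists_injOn_of_encard_le (s := electionViews n)
    (t := (Set.univ : Set (Fin (n ^ 2 + 1) → HashField n))) <| by
    rw [Set.encard_univ, ENat.card_eq_coe_natCard]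
    exact (encard_electionViews_le n).trans (mod_cast hcard)
  exact ⟨c, hc⟩

/-- A code in which the views at the election index of graphs with `n` nodes have distinct
codewords. -/
noncomputable def viewCode (n : ℕ) : AugView → Fin (n ^ 2 + 1) → HashField n :=
  (exists_injOn_electionViews n).choose

theorem injOn_viewCode (n : ℕ) : Set.InjOn (viewCode n) (electionViews n) :=
  (exists_injOn_electionViews n).choose_spec

open Classical in
/-- The hash value of a view: its codeword, read as the list of coefficients of a polynomial,
evaluated at `a`. -/
noncomputable def viewHash {n : ℕ} (a : HashField n) (B : AugView) : HashField n :=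
  (ofFn (n ^ 2 + 1) (viewCode n B)).eval a

theorem exists_injective_viewHash {PG : PortGraph} (hPG : PG.Feasible) :
    ∃ a : HashField PG.n, Injective fun v => viewHash a (PG.augView PG.electionIndex v) := by
  classical
  have hinj : Injective (PG.augView PG.electionIndex) := Nat.sInf_mem hPG
  refine exists_injective_eval_ofFn (c := fun v => viewCode PG.n _) (fun v w hvw => hinj ?_) ?_
  · exact injOn_viewCode PG.n (PG.augView_electionIndex_mem_electionViews v)
      (PG.augView_electionIndex_mem_electionViews w) hvw
  · rw [Nat.card_fin, ← Nat.cast_card]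
    exact_mod_cast sq_mul_lt_card_hashField PG.n

/-- The output of a node with view `B`: the way to the root from the node listed in the advice with
the hash value of `B`, or the junk value `[]` if there is no such node. -/
noncomputable def elect {n : ℕ} : Advice n → AugView → List ℕ
  | (a, entries), B => extend (fun v => (entries v).1)
      (TreeTable.pathToRoot (fun v => (entries v).2) n) (fun _ => []) (viewHash a B)

theorem exists_advice (PG : PortGraph) (hPG : PG.Feasible) :
    ∃ x : Advice PG.n, PG.IsLeaderElection fun v => elect x (PG.augView PG.electionIndex v) := by
  obtain ⟨a, ha⟩ := exists_injective_viewHash hPG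
  let r : Fin PG.n := ⟨0, by have := PG.three_le; omega⟩
  obtain ⟨T, hT⟩ := PG.exists_isBFSTable r
  refine ⟨(a, fun v => (viewHash a (PG.augView PG.electionIndex v), T v)), r, fun v => ?_⟩
  have hdist : PG.G.dist v r ≤ PG.n := by
    simpa using (dist_lt_card (PG.conn.preconnected v r)).le
  obtain ⟨vs, hpath, hnodup, hlast, -⟩ := hT.isPath_pathToRoot hdist
  refine ⟨vs, ?_, hnodup, hlast⟩
  simpa only [elect, ha.extend_apply] using hpath

end PortGraph

end Advice

/-- Advice of size `O(n log n)` suffices to perform leader election in time equal to the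
election index: there are an oracle `A` and a function `f` such that for every feasible
graph `G`, `|A(G)| ≤ C · n · log n` and `v ↦ f (A(G), B^φ(v))` elects a leader. -/
theorem advice_upper_bound_min_time :
    ∃ (C : ℝ) (A : PortGraph → List Bool)
      (f : List Bool → PortGraph.AugView → List ℕ), 0 < C ∧
      ∀ PG : PortGraph, PG.Feasible →
        (((A PG).length : ℝ) ≤ C * (PG.n : ℝ) * Real.logb 2 (PG.n : ℝ)) ∧
        PG.IsLeaderElection (fun v => f (A PG) (PG.augView PG.electionIndex v)) := by
  obtain ⟨enc, henc, hlen⟩ := exists_advice_encoding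
  choose! advice hadvice using PortGraph.exists_advice
  refine ⟨18, fun PG => enc ⟨PG.n, advice PG⟩,
    extend enc (fun x => PortGraph.elect x.2) fun _ _ => [], by norm_num, fun PG hPG => ⟨?_, ?_⟩⟩
  · have hn : (3 : ℝ) ≤ PG.n := mod_cast PG.three_le
    rw [hlen]
    push_cast
    calc (7 * PG.n + 4 : ℝ) * bitWidth PG.n
        ≤ (9 * PG.n) * (2 * Real.logb 2 PG.n) := by
          gcongr
          · linarith
          · exact bitWidth_le_two_mul_logb (by have := PG.three_le; omega)
      _ = 18 * PG.n * Real.logb 2 PG.n := by ring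
  · simp only [henc.extend_apply]
    exact hadvice PG hPG

end Election
end

section
/- There is a constant c > 0 with the following property. Let A be an oracle assigning a binary advice string to every feasible port-numbered graph, and let f be a function such that for every feasible port-numbered graph G with election index 1, the assignment v ↦ f(A(G), B^1(v)) is a leader election output for G. Then there exist infinitely many integers n for which some n-node feasible port-numbered graph G with election index 1 satisfies |A(G)| ≥ c·n·log log n. That is, leader election in time 1 in graphs of election index 1 requires advice of size Ω(n log log n). -/
namespace Election

/-!
Arrange `k = x ^ x` cliques of size `x + 1` cyclically and join a root of each into a clique, the
edge between two roots carrying their cyclic distances as port numbers. Inside a clique the port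
numbers encode a label, one of `k` possible ones, that is visible in every view of depth one, so
placing the `k` labels in any order gives a graph of election index one. The view of a root depends
only on its label, while the port numbers along a path determine the cyclic distance between its
ends. Hence the advice determines the order of the labels up to rotation, and `(k - 1)!` different
advice strings are needed: some string has length of order `log k! ~ k x log x`, whereas the graphs
have `n = k (x + 1)` nodes and `log log n ~ log x`.
-/

namespace PortGraph

variable {PG PG' : PortGraph} {v : Fin PG.n} {v' : Fin PG'.n}

theorem nbr_eq_of_adj {u : Fin PG.n} (h : PG.G.Adj v u) : PG.nbr v (PG.portNum v u) = u := by
  have hex : ∃ w, PG.G.Adj v w ∧ PG.portNum v w = PG.portNum v u := ⟨u, h, rfl⟩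
  rw [nbr, dif_pos hex]
  exact PG.port_inj v _ _ hex.choose_spec.1 h hex.choose_spec.2

theorem bijOn_portNum (v : Fin PG.n) :
    Set.BijOn (PG.portNum v) (PG.G.neighborSet v) (Set.Iio (PG.degree v)) := by
  have hmaps : Set.MapsTo (PG.portNum v) (PG.G.neighborSet v) (Set.Iio (PG.degree v)) :=
    fun u hu => PG.port_lt v u hu
  have hinj : Set.InjOn (PG.portNum v) (PG.G.neighborSet v) :=
    fun u hu w hw => PG.port_inj v u w hu hw
  have himage : PG.portNum v '' PG.G.neighborSet v = Set.Iio (PG.degree v) := by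
    refine Set.eq_of_subset_of_ncard_le hmaps.image_subset ?_
    rw [hinj.ncard_image, Set.ncard_Iio_nat]
    exact le_rfl
  exact himage ▸ hinj.bijOn_image

theorem augView_one_eq_iff :
    PG.augView 1 v = PG'.augView 1 v' ↔
      PG.degree v = PG'.degree v' ∧ ∀ u u', PG.G.Adj v u → PG'.G.Adj v' u' →
        PG.portNum v u = PG'.portNum v' u' →
          PG.portNum u v = PG'.portNum u' v' ∧ PG.degree u = PG'.degree u' := by
  simp only [augView, AugView.node.injEq]
  constructor
  · intro h
    have hdeg : PG.degree v = PG'.degree v' := by simpa using congrArg List.length h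
    refine ⟨hdeg, fun u u' hu hu' hport => ?_⟩
    rw [← hdeg, List.map_inj_left] at h
    have hchild := h _ (List.mem_range.2 (PG.port_lt v u hu))
    rw [nbr_eq_of_adj hu, hport, nbr_eq_of_adj hu'] at hchild
    simpa using hchild
  · rintro ⟨hdeg, h⟩
    rw [← hdeg, List.map_inj_left]
    intro p hp
    have hp := List.mem_range.1 hp
    obtain ⟨u, hu, rfl⟩ := (bijOn_portNum v).surjOn hp
    obtain ⟨u', hu', hport⟩ := (bijOn_portNum v').surjOn (hdeg ▸ hp)
    have hback := h u u' hu hu' hport.symm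
    rw [nbr_eq_of_adj hu, ← hport, nbr_eq_of_adj hu', hback.1, hback.2]

theorem electionIndex_eq_one (h₁ : Function.Injective (PG.augView 1))
    (h₀ : ¬ Function.Injective (PG.augView 0)) : PG.electionIndex = 1 := by
  have hmem : Function.Injective (PG.augView PG.electionIndex) :=
    Nat.sInf_mem (s := {ℓ | Function.Injective (PG.augView ℓ)}) ⟨1, h₁⟩
  refine le_antisymm (Nat.sInf_le h₁) (Nat.one_le_iff_ne_zero.2 fun h => h₀ ?_)
  rwa [h] at hmem

/-- The total displacement along a path with the given code, when following an edge from its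
end with port number `p` displaces by `step p`. -/
def displacement {M : Type*} [AddMonoid M] (step : ℕ → M) : List ℕ → M
  | p :: _ :: s => step p + displacement step s
  | _ => 0

theorem IsPath.getLast?_eq_add_displacement {M : Type*} [AddMonoid M] {pos : Fin PG.n → M}
    {step : ℕ → M} (hstep : ∀ v u, PG.G.Adj v u → pos u = pos v + step (PG.portNum v u))
    {s : List ℕ} {vs : List (Fin PG.n)} (h : PG.IsPath v s vs) {w : Fin PG.n}
    (hw : vs.getLast? = some w) : pos w = pos v + displacement step s := by
  induction h with
  | nil v =>
    obtain rfl : v = w := by simpa using hw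
    simp [displacement]
  | cons v u p q rest vs hadj hp _ htail ih =>
    have hlast : vs.getLast? = some w := by cases htail <;> simpa using hw
    rw [ih hlast, hstep v u hadj, hp, displacement, add_assoc]

theorem IsLeaderElection.pos_sub_pos {M : Type*} [AddCommGroup M] {pos : Fin PG.n → M}
    {step : ℕ → M} (hstep : ∀ v u, PG.G.Adj v u → pos u = pos v + step (PG.portNum v u))
    {P : Fin PG.n → List ℕ} (h : PG.IsLeaderElection P) (v w : Fin PG.n) :
    pos v - pos w = displacement step (P w) - displacement step (P v) := by
  obtain ⟨leader, hleader⟩ := h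
  have hpos (u : Fin PG.n) : pos leader = pos u + displacement step (P u) := by
    obtain ⟨vs, hpath, -, hlast⟩ := hleader u
    exact hpath.getLast?_eq_add_displacement hstep hlast
  rw [sub_eq_sub_iff_add_eq_add, add_comm _ (pos w), ← hpos v, hpos w]

end PortGraph

/-- A port-numbered graph on an arbitrary finite type of nodes. The degree of each node is part of
the data, and the field `bijOn_port` both certifies it and says that the ports are numbered
`0, …, deg v - 1`. -/
structure PortGraphOn (V : Type*) [Fintype V] where
  three_le_card : 3 ≤ Fintype.card V
  graph : SimpleGraph V
  connected : graph.Connected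
  deg : V → ℕ
  port : V → V → ℕ
  bijOn_port : ∀ v, Set.BijOn (port v) (graph.neighborSet v) (Set.Iio (deg v))

namespace PortGraphOn

variable {V : Type*} [Fintype V] (P : PortGraphOn V)

theorem card_adj (v : V) : Nat.card {w // P.graph.Adj v w} = P.deg v := by
  calc
    Nat.card {w // P.graph.Adj v w} = Nat.card (Set.Iio (P.deg v)) :=
      Nat.card_congr ((P.bijOn_port v).equiv (P.port v))
    _ = P.deg v := by simp

theorem card_comap_adj {W : Type*} (e : W ≃ V) (v : W) :
    Nat.card {w // (P.graph.comap e).Adj v w} = P.deg (e v) := by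
  rw [← P.card_adj]
  exact Nat.card_congr (e.subtypeEquiv fun _ => Iff.rfl)

/-- The copy of `P` on the node set `Fin (Fintype.card V)`, along an arbitrary numbering of `V`. -/
noncomputable def toPortGraph : PortGraph where
  n := Fintype.card V
  three_le := P.three_le_card
  G := P.graph.comap (Fintype.equivFin V).symm
  conn := (SimpleGraph.Iso.comap (Fintype.equivFin V).symm P.graph).connected_iff.2 P.connected
  portNum v u := P.port ((Fintype.equivFin V).symm v) ((Fintype.equivFin V).symm u)
  port_lt v u h := by
    rw [P.card_comap_adj]
    exact (P.bijOn_port _).mapsTo h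
  port_inj v u w hu hw h :=
    (Fintype.equivFin V).symm.injective ((P.bijOn_port _).injOn hu hw h)

/-- The correspondence between the nodes of `P` and those of its copy `P.toPortGraph`. -/
noncomputable def node : V ≃ Fin P.toPortGraph.n :=
  Fintype.equivFin V

@[simp]
theorem adj_node {v w : V} : P.toPortGraph.G.Adj (P.node v) (P.node w) ↔ P.graph.Adj v w := by
  change P.graph.Adj (P.node.symm (P.node v)) (P.node.symm (P.node w)) ↔ _
  simp only [Equiv.symm_apply_apply]

@[simp]
theorem portNum_node (v w : V) : P.toPortGraph.portNum (P.node v) (P.node w) = P.port v w := by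
  change P.port (P.node.symm (P.node v)) (P.node.symm (P.node w)) = _
  simp only [Equiv.symm_apply_apply]

@[simp]
theorem degree_node (v : V) : P.toPortGraph.degree (P.node v) = P.deg v := by
  rw [← P.card_adj]
  exact (Nat.card_congr (P.node.subtypeEquiv fun _ => P.adj_node.symm)).symm

theorem augView_zero_node (v : V) :
    P.toPortGraph.augView 0 (P.node v) = PortGraph.AugView.leaf (P.deg v) := by
  rw [PortGraph.augView, degree_node]

variable {P} in
theorem augView_one_node_eq_iff {W : Type*} [Fintype W] {Q : PortGraphOn W} {v : V} {v' : W} :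
    P.toPortGraph.augView 1 (P.node v) = Q.toPortGraph.augView 1 (Q.node v') ↔
      P.deg v = Q.deg v' ∧ ∀ w w', P.graph.Adj v w → Q.graph.Adj v' w' →
        P.port v w = Q.port v' w' → P.port w v = Q.port w' v' ∧ P.deg w = Q.deg w' := by
  simp only [PortGraph.augView_one_eq_iff, ← P.node.forall_congr_right,
    ← Q.node.forall_congr_right, adj_node, portNum_node, degree_node]

end PortGraphOn

namespace CliqueRing

/-- The nodes of a ring of `k` cliques of size `x + 1`: `(p, none)` is the root of the clique at
position `p`, and the `(p, some i)` are its other nodes. -/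
abbrev Vert (k x : ℕ) : Type := ZMod k × Option (ZMod x)

/-- The ring of cliques: the nodes at each position form a clique, and so do all the roots. -/
def graph (k x : ℕ) : SimpleGraph (Vert k x) where
  Adj
    | (p, none), (q, none) => p ≠ q
    | (p, none), (q, some _) => p = q
    | (p, some _), (q, none) => p = q
    | (p, some i), (q, some j) => p = q ∧ i ≠ j
  symm := ⟨by
    rintro ⟨p, _ | i⟩ ⟨q, _ | j⟩ h
    · exact Ne.symm h
    · exact Eq.symm h
    · exact Eq.symm h
    · exact ⟨h.1.symm, h.2.symm⟩⟩
  loopless := ⟨by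
    rintro ⟨p, _ | i⟩ h
    · exact h rfl
    · exact h.2 rfl⟩

/-- The degrees of the nodes of the ring of cliques. -/
def deg (k x : ℕ) : Vert k x → ℕ
  | (_, none) => x + k - 1
  | (_, some _) => x

variable {k x : ℕ}

/-- The port numbers of a ring of cliques, where `label p` is the label of the clique at position
`p`. A root uses the ports below `x` inside its clique, and port `x + d - 1` towards the root at
cyclic distance `d > 0`. The ports at `(p, some i)` are shifted cyclically by `label p i`, so that
they reveal this value. -/
def port (label : ZMod k → ZMod x → ZMod x) : Vert k x → Vert k x → ℕ
  | (p, none), (q, none) => x + (q - p).val - 1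
  | (_, none), (_, some i) => i.val
  | (p, some i), (_, none) => (label p i).val
  | (p, some i), (_, some j) => (label p i + (j - i)).val

section Graph

variable {p q : ZMod k} {i j : ZMod x}

@[simp]
theorem adj_root_root : (graph k x).Adj (p, none) (q, none) ↔ p ≠ q := Iff.rfl

@[simp]
theorem adj_root_some : (graph k x).Adj (p, none) (q, some j) ↔ p = q := Iff.rfl

@[simp]
theorem adj_some_root : (graph k x).Adj (p, some i) (q, none) ↔ p = q := Iff.rfl

@[simp]
theorem adj_some_some : (graph k x).Adj (p, some i) (q, some j) ↔ p = q ∧ i ≠ j := Iff.rfl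

theorem connected_graph : (graph k x).Connected := by
  have reachable_root (p : ZMod k) (a : Option (ZMod x)) :
      (graph k x).Reachable (p, a) (p, none) := by
    rcases a with _ | i
    · rfl
    · exact (adj_some_root.2 rfl).reachable
  have reachable_roots (p q : ZMod k) : (graph k x).Reachable (p, none) (q, none) := by
    rcases eq_or_ne p q with rfl | h
    · rfl
    · exact (adj_root_root.2 h).reachable
  exact ⟨fun v w => (reachable_root v.1 v.2).trans
    ((reachable_roots v.1 w.1).trans (reachable_root w.1 w.2).symm)⟩

end Graph

variable {label label' : ZMod k → ZMod x → ZMod x}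

theorem le_port_root_root {p q : ZMod k} (h : p ≠ q) :
    x ≤ port label (p, none) (q, none) := by
  have := ZMod.val_pos.2 (sub_ne_zero.2 h.symm)
  simp only [port]
  omega

section Ports

variable [NeZero x]

theorem port_root_some_lt (p q : ZMod k) (j : ZMod x) :
    port label (p, none) (q, some j) < x :=
  ZMod.val_lt j

theorem port_root_some_ne_port_root_root {p q p' q' : ZMod k} (h : p' ≠ q') (j : ZMod x) :
    port label (p, none) (q, some j) ≠ port label' (p', none) (q', none) :=
  ((port_root_some_lt p q j).trans_le (le_port_root_root h)).ne

theorem port_some_lt (p : ZMod k) (i : ZMod x) (w : Vert k x) : port label (p, some i) w < x := by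
  rcases w with ⟨q, _ | j⟩ <;> exact ZMod.val_lt _

theorem bijOn_port_some (p : ZMod k) (i : ZMod x) :
    Set.BijOn (port label (p, some i)) ((graph k x).neighborSet (p, some i)) (Set.Iio x) := by
  refine ⟨?_, ?_, ?_⟩
  · exact fun w _ => port_some_lt p i w
  · rintro ⟨q, _ | j⟩ hq ⟨r, _ | l⟩ hr h <;>
      simp only [SimpleGraph.mem_neighborSet, adj_some_root, adj_some_some] at hq hr <;>
      have h := ZMod.val_injective x h
    · rw [← hq, ← hr]
    · exact absurd (by linear_combination h) hr.2
    · exact absurd (by linear_combination -h) hq.2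
    · rw [← hq.1, ← hr.1, sub_left_injective (add_left_cancel h)]
  · intro m hm
    have hval : (m : ZMod x).val = m := ZMod.val_cast_of_lt hm
    rcases eq_or_ne (m : ZMod x) (label p i) with h | h
    · exact ⟨(p, none), rfl, by rw [port, ← h, hval]⟩
    · refine ⟨(p, some (i + (m - label p i))), ⟨rfl, ?_⟩, ?_⟩
      · rwa [Ne, left_eq_add, sub_eq_zero]
      · rw [port, add_sub_cancel_left, add_sub_cancel, hval]

variable [NeZero k]

theorem sub_eq_sub_of_port_root_root_eq {p q p' q' : ZMod k}
    (h : port label (p, none) (q, none) = port label' (p', none) (q', none)) :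
    q - p = q' - p' := by
  have hx := NeZero.pos x
  simp only [port] at h
  exact ZMod.val_injective k (by omega)

theorem bijOn_port_root (p : ZMod k) :
    Set.BijOn (port label (p, none)) ((graph k x).neighborSet (p, none)) (Set.Iio (x + k - 1)) := by
  have hx := NeZero.pos x
  refine ⟨?_, ?_, ?_⟩
  · rintro ⟨q, _ | j⟩ - <;> simp only [port, Set.mem_Iio]
    · have := ZMod.val_lt (q - p)
      omega
    · have := ZMod.val_lt j
      have := NeZero.pos k
      omega
  · rintro ⟨q, _ | j⟩ hq ⟨r, _ | l⟩ hr h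
    · rw [sub_left_injective (sub_eq_sub_of_port_root_root_eq h)]
    · exact absurd h.symm (port_root_some_ne_port_root_root hq l)
    · exact absurd h (port_root_some_ne_port_root_root hr j)
    · obtain rfl : p = q := hq
      obtain rfl : p = r := hr
      rw [ZMod.val_injective x h]
  · intro m hm
    rw [Set.mem_Iio] at hm
    rcases lt_or_ge m x with hmx | hmx
    · exact ⟨(p, some (m : ZMod x)), rfl, ZMod.val_cast_of_lt hmx⟩
    · have hval : ((m + 1 - x : ℕ) : ZMod k).val = m + 1 - x := ZMod.val_cast_of_lt (by omega)
      have hpos : ((m + 1 - x : ℕ) : ZMod k) ≠ 0 := by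
        rw [← ZMod.val_pos, hval]
        omega
      have hne : p ≠ p + (m + 1 - x : ℕ) := by rwa [Ne, left_eq_add]
      refine ⟨(p + (m + 1 - x : ℕ), none), hne, ?_⟩
      simp only [port, add_sub_cancel_left, hval]
      omega

theorem card_vert : Fintype.card (Vert k x) = k * (x + 1) := by
  simp [ZMod.card]

/-- The ring of cliques of size `x + 1` in which the clique at position `p` has label `label p`. -/
def ring (hx : 2 ≤ x) (label : ZMod k → ZMod x → ZMod x) : PortGraphOn (Vert k x) where
  three_le_card := by
    rw [card_vert]
    have := NeZero.pos k
    nlinarith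
  graph := graph k x
  connected := connected_graph
  deg := deg k x
  port := port label
  bijOn_port := by
    rintro ⟨p, _ | i⟩
    · exact bijOn_port_root p
    · exact bijOn_port_some p i

end Ports

section Views

variable [NeZero k] [NeZero x] {hx : 2 ≤ x} {p p' : ZMod k}

theorem augView_one_root_eq_iff :
    (ring hx label).toPortGraph.augView 1 ((ring hx label).node (p, none)) =
        (ring hx label').toPortGraph.augView 1 ((ring hx label').node (p', none)) ↔
      label p = label' p' := by
  rw [PortGraphOn.augView_one_node_eq_iff]
  refine ⟨fun h => funext fun i => ZMod.val_injective x ?_, fun hlabel => ⟨rfl, ?_⟩⟩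
  · exact (h.2 (p, some i) (p', some i) rfl rfl rfl).1
  · rintro ⟨q, _ | j⟩ ⟨q', _ | j'⟩ hq hq' h <;>
      dsimp only [ring] at h
    · have hsub : q - p = q' - p' := sub_eq_sub_of_port_root_root_eq h
      have hback : p - q = p' - q' := by rw [← neg_sub, hsub, neg_sub]
      exact ⟨by simp only [ring, port, hback], rfl⟩
    · exact absurd h.symm (port_root_some_ne_port_root_root hq j')
    · exact absurd h (port_root_some_ne_port_root_root hq' j)
    · obtain rfl : p = q := hq
      obtain rfl : p' = q' := hq'
      obtain rfl : j = j' := ZMod.val_injective x h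
      exact ⟨by simp only [ring, port, hlabel], rfl⟩

/-- The root is the neighbor of larger degree, so a node `(p, some i)` sees `label p i` as its
port towards the root and `i` as the port of the root. The neighbor reached through the port
`label p i + (j - i)` is then recognized as `(p, some j)`, and its port `label p j + (i - j)`
reveals `label p j`. -/
theorem eq_and_label_eq_of_augView_one_some_eq (hk : 2 ≤ k) {i i' : ZMod x}
    (h : (ring hx label).toPortGraph.augView 1 ((ring hx label).node (p, some i)) =
      (ring hx label').toPortGraph.augView 1 ((ring hx label').node (p', some i'))) :
    i = i' ∧ label p = label' p' := by
  obtain ⟨-, h⟩ := PortGraphOn.augView_one_node_eq_iff.1 h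
  obtain ⟨u, hu, hport⟩ := (bijOn_port_some (label := label') p' i').surjOn
    (ZMod.val_lt (label p i))
  have hroot := h (p, none) u rfl hu hport.symm
  rcases u with ⟨q, _ | l⟩
  · obtain rfl : p' = q := hu
    obtain rfl : i = i' := ZMod.val_injective x hroot.1
    have hi : label p i = label' p' i := (ZMod.val_injective x hport).symm
    refine ⟨rfl, funext fun j => ?_⟩
    rcases eq_or_ne i j with rfl | hij
    · exact hi
    · have hj := h (p, some j) (p', some j) ⟨rfl, hij⟩ ⟨rfl, hij⟩
        (by simp only [ring, port, hi])
      exact add_right_cancel (ZMod.val_injective x hj.1)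
  · have hdeg : x + k - 1 = x := hroot.2
    omega

theorem injective_augView_one (hk : 2 ≤ k) (hlabel : Function.Injective label) :
    Function.Injective ((ring hx label).toPortGraph.augView 1) := by
  rw [← (ring hx label).node.injective_comp]
  rintro ⟨p, _ | i⟩ ⟨q, _ | j⟩ h
  · rw [hlabel (augView_one_root_eq_iff.1 h)]
  · have hdeg : x + k - 1 = x := (PortGraphOn.augView_one_node_eq_iff.1 h).1
    omega
  · have hdeg : x = x + k - 1 := (PortGraphOn.augView_one_node_eq_iff.1 h).1
    omega
  · obtain ⟨hij, hpq⟩ := eq_and_label_eq_of_augView_one_some_eq hk h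
    rw [hij, hlabel hpq]

theorem not_injective_augView_zero :
    ¬ Function.Injective ((ring hx label).toPortGraph.augView 0) := by
  have : Fact (1 < x) := ⟨hx⟩
  intro h
  have h01 : ((0, some 0) : Vert k x) = (0, some 1) :=
    (ring hx label).node.injective (h (by simp only [PortGraphOn.augView_zero_node]; rfl))
  simp at h01

end Views

section Advice

variable [NeZero k] [NeZero x]

/-- The change of position when a node is left through port `m`. -/
def step (k x m : ℕ) : ZMod k :=
  if x ≤ m then (m + 1 - x : ℕ) else 0

theorem fst_eq_add_step {v w : Vert k x} (h : (graph k x).Adj v w) :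
    w.1 = v.1 + step k x (port label v w) := by
  rcases v with ⟨p, _ | i⟩ <;> rcases w with ⟨q, _ | j⟩
  · have hpos := ZMod.val_pos.2 (sub_ne_zero.2 (Ne.symm (adj_root_root.1 h)))
    have hval : x + (q - p).val - 1 + 1 - x = (q - p).val := by omega
    rw [step, if_pos (le_port_root_root h), port, hval, ZMod.natCast_zmod_val, add_sub_cancel]
  · rw [step, if_neg (port_root_some_lt p q j).not_ge, add_zero]
    exact (adj_root_some.1 h).symm
  · rw [step, if_neg (port_some_lt p i _).not_ge, add_zero]
    exact (adj_some_root.1 h).symm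
  · rw [step, if_neg (port_some_lt p i _).not_ge, add_zero]
    exact (adj_some_some.1 h).1.symm

theorem sub_eq_displacement_sub {hx : 2 ≤ x} {P : Fin (ring hx label).toPortGraph.n → List ℕ}
    (h : (ring hx label).toPortGraph.IsLeaderElection P) (v w : Vert k x) :
    v.1 - w.1 = PortGraph.displacement (step k x) (P ((ring hx label).node w)) -
      PortGraph.displacement (step k x) (P ((ring hx label).node v)) := by
  have hstep : ∀ a b, (ring hx label).toPortGraph.G.Adj a b →
      ((ring hx label).node.symm b).1 = ((ring hx label).node.symm a).1 +
        step k x ((ring hx label).toPortGraph.portNum a b) :=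
    fun _ _ hab => fst_eq_add_step hab
  simpa only [Equiv.symm_apply_apply] using
    h.pos_sub_pos hstep ((ring hx label).node v) ((ring hx label).node w)

theorem injective_advice (hx : 2 ≤ x) {A : PortGraph → List Bool}
    {f : List Bool → PortGraph.AugView → List ℕ}
    (h : ∀ e : ZMod k ≃ (ZMod x → ZMod x), (ring hx e).toPortGraph.IsLeaderElection
      fun v => f (A (ring hx e).toPortGraph) ((ring hx e).toPortGraph.augView 1 v)) :
    Function.Injective fun e : ZMod k ≃ (ZMod x → ZMod x) =>
      (A (ring hx e).toPortGraph, e.symm 0) := by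
  intro e e' hee'
  obtain ⟨hA, h0⟩ := Prod.mk.inj hee'
  have hview (t : ZMod x → ZMod x) :
      (ring hx e).toPortGraph.augView 1 ((ring hx e).node (e.symm t, none)) =
        (ring hx e').toPortGraph.augView 1 ((ring hx e').node (e'.symm t, none)) :=
    augView_one_root_eq_iff.2 (by simp only [Equiv.apply_symm_apply])
  have hsub (t : ZMod x → ZMod x) : e.symm t - e.symm 0 = e'.symm t - e'.symm 0 := by
    have he := sub_eq_displacement_sub (h e) (e.symm t, none) (e.symm 0, none)
    have he' := sub_eq_displacement_sub (h e') (e'.symm t, none) (e'.symm 0, none)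
    rw [he, he', hview, hview, hA]
  refine Equiv.symm_bijective.injective (Equiv.ext fun t => ?_)
  have ht := hsub t
  rwa [h0, sub_left_inj] at ht

end Advice

end CliqueRing

theorem exists_card_le_two_pow_length_mul {α β : Type*} [Fintype α] [Nonempty α] [Fintype β]
    {g : α → List Bool} {r : α → β} (h : Function.Injective fun a => (g a, r a)) :
    ∃ a, Fintype.card α ≤ 2 ^ ((g a).length + 1) * Fintype.card β := by
  obtain ⟨a, ha⟩ := Finite.exists_max fun a => (g a).length
  refine ⟨a, ?_⟩
  let code (b : α) : (Σ i : Fin ((g a).length + 1), List.Vector Bool i) × β :=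
    (⟨⟨(g b).length, Nat.lt_succ_of_le (ha b)⟩, g b, rfl⟩, r b)
  have hcode : Function.Injective code :=
    Function.Injective.of_comp (f := Prod.map (fun s => s.2.toList) id) h
  calc Fintype.card α
      ≤ (∑ i : Fin ((g a).length + 1), 2 ^ (i : ℕ)) * Fintype.card β := by
        simpa using Fintype.card_le_of_injective code hcode
    _ ≤ 2 ^ ((g a).length + 1) * Fintype.card β := by
        rw [Fin.sum_univ_eq_sum_range (2 ^ ·)]
        exact Nat.mul_le_mul_right _ (Nat.geomSum_lt le_rfl fun i => Finset.mem_range.1).le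

theorem exists_factorial_le_two_pow_length_mul {x : ℕ} (hx : 2 ≤ x) {A : PortGraph → List Bool}
    {f : List Bool → PortGraph.AugView → List ℕ}
    (h : ∀ PG : PortGraph, PG.Feasible → PG.electionIndex = 1 →
      PG.IsLeaderElection fun v => f (A PG) (PG.augView 1 v)) :
    ∃ PG : PortGraph, PG.n = x ^ x * (x + 1) ∧ PG.Feasible ∧ PG.electionIndex = 1 ∧
      (x ^ x).factorial ≤ 2 ^ ((A PG).length + 1) * x ^ x := by
  have : NeZero x := ⟨by omega⟩
  have hk : 2 ≤ x ^ x := hx.trans (Nat.le_self_pow (by omega) x)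
  have hcard : Fintype.card (ZMod (x ^ x)) = Fintype.card (ZMod x → ZMod x) := by
    simp [ZMod.card]
  let G (e : ZMod (x ^ x) ≃ (ZMod x → ZMod x)) : PortGraph := (CliqueRing.ring hx e).toPortGraph
  have hinj (e) : Function.Injective ((G e).augView 1) :=
    CliqueRing.injective_augView_one hk e.injective
  have hindex (e) : (G e).electionIndex = 1 :=
    PortGraph.electionIndex_eq_one (hinj e) CliqueRing.not_injective_augView_zero
  have : Nonempty (ZMod (x ^ x) ≃ (ZMod x → ZMod x)) := ⟨Fintype.equivOfCardEq hcard⟩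
  obtain ⟨e, he⟩ := exists_card_le_two_pow_length_mul
    (CliqueRing.injective_advice hx fun e => h (G e) ⟨1, hinj e⟩ (hindex e))
  rw [Fintype.card_equiv e, ZMod.card] at he
  exact ⟨G e, CliqueRing.card_vert, ⟨1, hinj e⟩, hindex e, he⟩

theorem pow_self_le_factorial_two_mul (n : ℕ) : n ^ n ≤ (2 * n).factorial :=
  calc n ^ n ≤ n.factorial * n ^ n := Nat.le_mul_of_pos_left _ n.factorial_pos
    _ = n.factorial * n ^ (2 * n - n) := by rw [two_mul, Nat.add_sub_cancel]
    _ ≤ (2 * n).factorial := Nat.factorial_mul_pow_sub_le_factorial (by omega)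

theorem mul_two_pow_le_of_factorial_le {b L : ℕ} (hb : 3 ≤ b)
    (h : (2 ^ b).factorial ≤ 2 ^ (L + 1) * 2 ^ b) : b * 2 ^ b ≤ 8 * L := by
  obtain ⟨c, rfl⟩ : ∃ c, b = c + 1 := ⟨b - 1, by omega⟩
  have hpow : 2 ^ (c * 2 ^ c) ≤ 2 ^ (L + 1 + (c + 1)) := by
    calc 2 ^ (c * 2 ^ c) = (2 ^ c) ^ 2 ^ c := pow_mul 2 c _
      _ ≤ (2 * 2 ^ c).factorial := pow_self_le_factorial_two_mul _
      _ ≤ 2 ^ (L + 1) * 2 ^ (c + 1) := by rwa [← pow_succ']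
      _ = 2 ^ (L + 1 + (c + 1)) := (pow_add 2 _ _).symm
  have hle : c * 2 ^ c ≤ L + 1 + (c + 1) := (Nat.pow_le_pow_iff_right (by norm_num)).1 hpow
  have h4 : 2 ^ 2 ≤ 2 ^ c := Nat.pow_le_pow_right (by norm_num) (by omega)
  rw [pow_succ]
  nlinarith

theorem logb_logb_le_of_le_two_pow_two_pow {n m : ℕ} (h : n ≤ 2 ^ 2 ^ m) :
    Real.logb 2 (Real.logb 2 n) ≤ m := by
  rcases Nat.lt_or_ge n 2 with hn | hn
  · interval_cases n <;> simp
  have hlog : Real.logb 2 n ≤ 2 ^ m := by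
    rw [Real.logb_le_iff_le_rpow (by norm_num) (by positivity)]
    exact_mod_cast h
  have hpos : 0 < Real.logb 2 n := Real.logb_pos (by norm_num) (by exact_mod_cast hn)
  rw [Real.logb_le_iff_le_rpow (by norm_num) hpos]
  exact_mod_cast hlog

theorem two_pow_pow_mul_le (a : ℕ) : (2 ^ a) ^ 2 ^ a * (2 ^ a + 1) ≤ 2 ^ 2 ^ (2 * a) := by
  have hlt : a + 1 ≤ 2 ^ a := Nat.lt_two_pow_self
  calc (2 ^ a) ^ 2 ^ a * (2 ^ a + 1) ≤ 2 ^ (a * 2 ^ a) * 2 ^ (a + 1) := by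
        rw [← pow_mul, pow_succ 2 a]
        gcongr
        omega
    _ = 2 ^ (a * 2 ^ a + (a + 1)) := (pow_add 2 _ _).symm
    _ ≤ 2 ^ 2 ^ (2 * a) := by
        gcongr
        · norm_num
        · rw [mul_comm 2 a, pow_mul]
          nlinarith

theorem loglog_le_length_of_factorial_le {a L : ℕ} (ha : 2 ≤ a)
    (h : ((2 ^ a) ^ 2 ^ a).factorial ≤ 2 ^ (L + 1) * (2 ^ a) ^ 2 ^ a) :
    1 / 32 * (((2 ^ a) ^ 2 ^ a * (2 ^ a + 1) : ℕ) : ℝ) *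
      Real.logb 2 (Real.logb 2 (((2 ^ a) ^ 2 ^ a * (2 ^ a + 1) : ℕ) : ℝ)) ≤ L := by
  set x := 2 ^ a with hx
  have h4 : 2 ^ 2 ≤ x := Nat.pow_le_pow_right (by norm_num) ha
  have hlog := logb_logb_le_of_le_two_pow_two_pow (two_pow_pow_mul_le a)
  have hL : a * x * x ^ x ≤ 8 * L := by
    have hk : x ^ x = 2 ^ (a * x) := by rw [pow_mul]
    rw [hk] at h ⊢
    exact mul_two_pow_le_of_factorial_le (by nlinarith) h
  have hnat : x ^ x * (x + 1) * (2 * a) ≤ 32 * L :=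
    calc x ^ x * (x + 1) * (2 * a) ≤ x ^ x * (2 * x) * (2 * a) := by gcongr; omega
      _ = 4 * (a * x * x ^ x) := by ring
      _ ≤ 32 * L := by omega
  calc _ ≤ 1 / 32 * ((x ^ x * (x + 1) : ℕ) : ℝ) * ((2 * a : ℕ) : ℝ) := by gcongr
    _ = 1 / 32 * ((x ^ x * (x + 1) * (2 * a) : ℕ) : ℝ) := by push_cast; ring
    _ ≤ 1 / 32 * ((32 * L : ℕ) : ℝ) := by gcongr
    _ = L := by push_cast; ring

/-- Leader election in time 1 in graphs of election index 1 requires advice of size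
`Ω(n log log n)`. -/
theorem advice_lower_bound_index_one :
    ∃ c : ℝ, 0 < c ∧
      ∀ (A : PortGraph → List Bool) (f : List Bool → PortGraph.AugView → List ℕ),
        (∀ PG : PortGraph, PG.Feasible → PG.electionIndex = 1 →
          PG.IsLeaderElection (fun v => f (A PG) (PG.augView 1 v))) →
        ∀ N : ℕ, ∃ n : ℕ, N ≤ n ∧ ∃ PG : PortGraph, PG.n = n ∧ PG.Feasible ∧
          PG.electionIndex = 1 ∧
          c * (n : ℝ) * Real.logb 2 (Real.logb 2 (n : ℝ)) ≤ ((A PG).length : ℝ) := by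
  refine ⟨1 / 32, by norm_num, fun A f hf N => ?_⟩
  let a := N + 2
  have ha : N < 2 ^ a := lt_of_le_of_lt (by omega) Nat.lt_two_pow_self
  have hx : 2 ≤ 2 ^ a := Nat.le_self_pow (by omega) 2
  obtain ⟨PG, hn, hfeasible, hindex, hcount⟩ := exists_factorial_le_two_pow_length_mul hx hf
  refine ⟨_, ?_, PG, hn, hfeasible, hindex, loglog_le_length_of_factorial_le (by omega) hcount⟩
  calc N ≤ 2 ^ a + 1 := by omega
    _ ≤ (2 ^ a) ^ 2 ^ a * (2 ^ a + 1) := Nat.le_mul_of_pos_left _ (by positivity)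

end Election
end
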